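/- Let R be a monotone pyramidal transit function on a finite nonempty set V, with total order < witnessing pyramidality, and suppose R satisfies axiom (b3) or axiom (b4). Then R(u,v) equals the closed order interval between u and v for all u,v ∈ V, i.e., for u ≤ v, R(u,v) = {w ∈ V : u ≤ w ≤ v}. -/

import Mathlib

/-!
A transit set is convex and contains its endpoints, so it contains the order interval they span.
Conversely let `w ∈ R u v`. One of `u`, `v`, `w` lies between the other two; were it `u`, say, then
`u ∈ R v w` by convexity, so `u` and `w` each lie in the transit set joining the other to `v`. Under
(b3) or (b4) this forces `w = u`.
-/

namespace TransitPaper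

variable {V : Type*}

/-- Transit function axioms (t1), (t2), (t3). -/
def IsTransit (R : V → V → Set V) : Prop :=
  (∀ u v, u ∈ R u v) ∧ (∀ u v, R u v = R v u) ∧ (∀ u : V, R u u = {u})

/-- Monotonicity axiom (m). -/
def IsMonotone (R : V → V → Set V) : Prop :=
  ∀ u v p q, p ∈ R u v → q ∈ R u v → R p q ⊆ R u v

/-- Two sets overlap: A ∩ B, A \ B, B \ A all nonempty. -/
def Ovl (A B : Set V) : Prop :=
  (A ∩ B).Nonempty ∧ (A \ B).Nonempty ∧ (B \ A).Nonempty

/-- The system of transit sets 𝒞_R. -/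
def transitSets (R : V → V → Set V) : Set (Set V) :=
  {S | ∃ x y, S = R x y}

/-- S is an interval with respect to the order `lt`. -/
def IsIntervalWrt (lt : V → V → Prop) (S : Set V) : Prop :=
  ∀ x ∈ S, ∀ y ∈ S, ∀ w, lt x w → lt w y → w ∈ S

/-- R is pyramidal: monotone and there is a total order making all transit sets intervals. -/
def IsPyramidal (R : V → V → Set V) : Prop :=
  IsMonotone R ∧ ∃ lt : V → V → Prop, IsStrictTotalOrder V lt ∧
    ∀ u v, IsIntervalWrt lt (R u v)

def AxUC (R : V → V → Set V) : Prop :=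
  ∀ x y u v : V, (R x y ∩ R u v).Nonempty →
    ∃ p ∈ R x y ∪ R u v, ∃ q ∈ R x y ∪ R u v, R x y ∪ R u v = R p q

def AxU (R : V → V → Set V) : Prop :=
  ∀ u v z : V, z ∈ R u v → R u v = R u z ∪ R z v

def AxW (R : V → V → Set V) : Prop :=
  ∀ x y z : V, z ∈ R x y ∨ y ∈ R x z ∨ x ∈ R y z

def AxWP (R : V → V → Set V) : Prop :=
  ∀ u v x y p q : V, (R u v ∩ R x y).Nonempty → (R u v ∩ R p q).Nonempty →
    (R x y ∩ R p q).Nonempty →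
    R p q ⊆ R u v ∪ R x y ∨ R u v ⊆ R p q ∪ R x y ∨ R x y ⊆ R p q ∪ R u v

def AxI (R : V → V → Set V) : Prop :=
  ∀ x y u v p q : V, (R x y ∩ R u v).Nonempty → R x y ∩ R u v ⊆ R p q →
    (R p q \ (R x y ∪ R u v)).Nonempty → R x y ⊆ R p q ∨ R u v ⊆ R p q

def AxO' (R : V → V → Set V) : Prop :=
  ∀ u v : V, ∀ z ∈ R u v, ∃ p ∈ R u v, ∃ q ∈ R u v, R p z ∪ R z q = R u v

def AxL1 (R : V → V → Set V) : Prop :=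
  ∀ x y p q u v : V, Ovl (R x y) (R p q) → Ovl (R p q) (R u v) →
    R x y ⊆ R u v ∨ R u v ⊆ R x y ∨
      (R x y ∩ R u v ⊆ R p q ∧ R p q ⊆ R x y ∪ R u v)

def AxL2 (R : V → V → Set V) : Prop :=
  ∀ x y p q u v : V, Ovl (R x y) (R p q) → Ovl (R p q) (R u v) →
    R x y ∩ R u v = ∅ →
    ∃ s ∈ R x y \ R p q, ∃ t ∈ R u v \ R p q,
      R x y ∪ R p q ∪ R u v = R s t

def AxN3O (R : V → V → Set V) : Prop :=
  ∀ x y p q u v : V, Ovl (R x y) (R p q) → Ovl (R p q) (R u v) →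
    R x y ⊆ R u v ∨ R u v ⊆ R x y ∨ R x y ∩ R u v = ∅

def AxU3 (R : V → V → Set V) : Prop :=
  ∀ x y : V, ¬ R x y ⊆ {x, y} →
    ∃ z ∈ R x y, z ≠ x ∧ z ≠ y ∧ R x z ∪ R z y = R x y

def AxB3 (R : V → V → Set V) : Prop :=
  ∀ u v x y : V, x ∈ R u v → y ∈ R u x → x ∈ R y v

def AxB4 (R : V → V → Set V) : Prop :=
  ∀ u v x : V, x ∈ R u v → R u x ∩ R x v = {x}

def AxTB (R : V → V → Set V) : Prop :=
  ∀ W : Finset V, 3 ≤ W.card →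
    ∃ x ∈ W, ∀ u ∈ W, ∀ v ∈ W, R x u ⊆ R x v ∨ R x v ⊆ R x u

def AxHC (R : V → V → Set V) : Prop :=
  ∀ W : Finset V, 3 ≤ W.card →
    ∃ x ∈ W, ∃ y ∈ W, x ≠ y ∧
      ∀ u ∈ W, ∀ v ∈ W,
        (R x u ⊆ R x v ∨ R x v ⊆ R x u) ∧ (R y u ⊆ R y v ∨ R y v ⊆ R y u)

def AxTB' (R : V → V → Set V) : Prop :=
  ∀ n : ℕ, 3 ≤ n → ∀ v : ZMod n → V,
    (∀ k : ZMod n, v (k - 1) ∉ R (v k) (v (k + 1)) ∧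
      v (k + 1) ∉ R (v (k - 1)) (v k)) →
    ∃ j i : ZMod n, i ≠ j ∧ i ≠ j - 1 ∧ v j ∈ R (v i) (v (i + 1))

def AxP2 (R : V → V → Set V) : Prop :=
  ∀ x y u v p q s t : V,
    Ovl (R x y) (R s t) → Ovl (R u v) (R s t) → Ovl (R p q) (R s t) →
    R x y ⊆ R u v ∪ R p q ∪ R s t ∨ R u v ⊆ R x y ∪ R p q ∪ R s t ∨
      R p q ⊆ R x y ∪ R u v ∪ R s t

def AxP3 (R : V → V → Set V) : Prop :=
  ∀ x y u v p q s t : V,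
    Ovl (R x y) (R u v) → Ovl (R x y) (R p q) → Ovl (R x y) (R s t) →
    R p q ⊆ R u v → R s t ⊆ R u v → (R p q ∩ R s t).Nonempty

def AxP4 (R : V → V → Set V) : Prop :=
  ∀ n : ℕ, 3 ≤ n → ∀ (u v y : V) (x : ℕ → V),
    (∀ i j : ℕ, 1 ≤ i → i ≤ n → 1 ≤ j → j + 1 ≤ n → j ≠ i - 1 → j ≠ i →
      x i ∉ R (x j) (x (j + 1))) →
    (R u v ∩ R (x 1) (x 2)).Nonempty →
    (R u v ∩ R (x (n - 1)) (x n)).Nonempty →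
    (∀ i : ℕ, 1 ≤ i → i + 1 ≤ n → y ∈ R u v \ R (x i) (x (i + 1))) →
    R (x 1) (x 2) ⊆ R u v ∨ R (x (n - 1)) (x n) ⊆ R u v

/-- A weak β-cycle in a set system 𝒞. -/
def HasWeakBetaCycle (𝒞 : Set (Set V)) : Prop :=
  ∃ n : ℕ, 3 ≤ n ∧ ∃ (C : ZMod n → Set V) (x : ZMod n → V),
    (∀ i, C i ∈ 𝒞) ∧ (∀ i, x i ∈ C i ∧ x i ∈ C (i + 1)) ∧
    (∀ i k : ZMod n, k ≠ i → k ≠ i + 1 → x i ∉ C k)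

def TotallyBalanced (𝒞 : Set (Set V)) : Prop := ¬ HasWeakBetaCycle 𝒞

/-- A pure cycle: a weak β-cycle with nonconsecutive sets disjoint. -/
def HasPureCycle (𝒞 : Set (Set V)) : Prop :=
  ∃ n : ℕ, 3 ≤ n ∧ ∃ (C : ZMod n → Set V) (x : ZMod n → V),
    (∀ i, C i ∈ 𝒞) ∧ (∀ i, x i ∈ C i ∧ x i ∈ C (i + 1)) ∧
    (∀ i k : ZMod n, k ≠ i → k ≠ i + 1 → x i ∉ C k) ∧
    (∀ i j : ZMod n, j ≠ i - 1 → j ≠ i → j ≠ i + 1 → C i ∩ C j = ∅)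

def HasGammaTriangle (𝒞 : Set (Set V)) : Prop :=
  ∃ C₁ C₂ C₃ : Set V, C₁ ∈ 𝒞 ∧ C₂ ∈ 𝒞 ∧ C₃ ∈ 𝒞 ∧
    (C₁ ∩ C₂).Nonempty ∧ (C₁ ∩ C₃).Nonempty ∧ (C₂ ∩ C₃).Nonempty ∧
    ∃ u ∈ C₃, ∃ w ∈ C₃, u ∈ C₁ \ C₂ ∧ w ∈ C₂ \ C₁

def GammaAcyclic (𝒞 : Set (Set V)) : Prop :=
  ¬ HasPureCycle 𝒞 ∧ ¬ HasGammaTriangle 𝒞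

def IsHierarchy (𝒞 : Set (Set V)) : Prop :=
  Set.univ ∈ 𝒞 ∧ (∀ x : V, {x} ∈ 𝒞) ∧
    ∀ A ∈ 𝒞, ∀ B ∈ 𝒞, A ∩ B = A ∨ A ∩ B = B ∨ A ∩ B = ∅

def WeakHierarchy (𝒞 : Set (Set V)) : Prop :=
  ∀ A ∈ 𝒞, ∀ B ∈ 𝒞, ∀ C ∈ 𝒞,
    A ∩ B ∩ C = A ∩ B ∨ A ∩ B ∩ C = A ∩ C ∨ A ∩ B ∩ C = B ∩ C

def AxWPSet (𝒞 : Set (Set V)) : Prop :=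
  ∀ A ∈ 𝒞, ∀ B ∈ 𝒞, ∀ C ∈ 𝒞,
    (A ∩ B).Nonempty → (A ∩ C).Nonempty → (B ∩ C).Nonempty →
    A ⊆ B ∪ C ∨ B ⊆ A ∪ C ∨ C ⊆ A ∪ B

def AxISet (𝒞 : Set (Set V)) : Prop :=
  ∀ A ∈ 𝒞, ∀ B ∈ 𝒞, ∀ C ∈ 𝒞,
    (A ∩ B).Nonempty → A ∩ B ⊆ C → (C \ (A ∪ B)).Nonempty →
    A ⊆ C ∨ B ⊆ C

def AxL1Set (𝒞 : Set (Set V)) : Prop :=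
  ∀ A ∈ 𝒞, ∀ B ∈ 𝒞, ∀ C ∈ 𝒞, Ovl A B → Ovl B C →
    A ⊆ C ∨ C ⊆ A ∨ (A ∩ C ⊆ B ∧ B ⊆ A ∪ C)

def AxN3OSet (𝒞 : Set (Set V)) : Prop :=
  ∀ A ∈ 𝒞, ∀ B ∈ 𝒞, ∀ C ∈ 𝒞, Ovl A B → Ovl B C → ¬ Ovl A C

def AxL2'Set (𝒞 : Set (Set V)) : Prop :=
  ∀ A ∈ 𝒞, ∀ B ∈ 𝒞, ∀ C ∈ 𝒞, Ovl A B → Ovl B C → A ∩ C = ∅ →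
    A ∪ B ∪ C ∈ 𝒞

def AxL2''Set (𝒞 : Set (Set V)) : Prop :=
  ∀ A ∈ 𝒞, ∀ B ∈ 𝒞, ∀ C ∈ 𝒞, ∀ D ∈ 𝒞, Ovl A B → Ovl B C → A ∩ C = ∅ →
    (A ∪ C) \ B ⊆ D → A ∪ B ∪ C ⊆ D

/-- Antisymmetry of the betweenness relation of `R`, the axiom (b1) of the literature on transit
functions: `x ∈ R(u,v)` and `x ≠ v` imply `v ∉ R(u,x)`, stated here contrapositively. It is the
common consequence of (b3) and (b4) that makes the transit sets no larger than order intervals. -/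
def AxB1 (R : V → V → Set V) : Prop :=
  ∀ u v x : V, x ∈ R u v → v ∈ R u x → x = v

section Transit

variable {R : V → V → Set V}

lemma IsTransit.left_mem (hR : IsTransit R) (u v : V) : u ∈ R u v :=
  hR.1 u v

lemma IsTransit.symm (hR : IsTransit R) (u v : V) : R u v = R v u :=
  hR.2.1 u v

lemma IsTransit.self (hR : IsTransit R) (u : V) : R u u = {u} :=
  hR.2.2 u

lemma IsTransit.right_mem (hR : IsTransit R) (u v : V) : v ∈ R u v :=
  hR.symm v u ▸ hR.left_mem v u

lemma AxB3.axB1 (hb : AxB3 R) (hself : ∀ u, R u u = {u}) : AxB1 R := by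
  intro u v x hx hv
  have hx_self : x ∈ R v v := hb u v x v hx hv
  rwa [hself] at hx_self

lemma AxB4.axB1 (hb : AxB4 R) (hright : ∀ u v, v ∈ R u v) : AxB1 R := by
  intro u v x hx hv
  have hv_inter : v ∈ R u x ∩ R x v := ⟨hv, hright x v⟩
  rw [hb u v x hx] at hv_inter
  exact hv_inter.symm

end Transit

lemma IsIntervalWrt.ordConnected [PartialOrder V] {S : Set V} (hS : IsIntervalWrt (· < ·) S) :
    S.OrdConnected := by
  refine ⟨fun x hx y hy w ⟨hxw, hwy⟩ => ?_⟩
  rcases hxw.eq_or_lt with rfl | hxw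
  · exact hx
  rcases hwy.eq_or_lt with rfl | hwy
  · exact hy
  exact hS x hx y hy w hxw hwy

lemma mem_uIcc_or_mem_uIcc_or_mem_uIcc [LinearOrder V] (a b c : V) :
    a ∈ Set.uIcc b c ∨ b ∈ Set.uIcc a c ∨ c ∈ Set.uIcc a b := by
  simp only [Set.mem_uIcc]
  grind

theorem stmt_5_general [LinearOrder V] {R : V → V → Set V} (hR : IsTransit R)
    (hint : ∀ u v : V, IsIntervalWrt (· < ·) (R u v)) (hb : AxB1 R) (u v : V) :
    R u v = Set.uIcc u v := by
  have uIcc_subset (a b : V) : Set.uIcc a b ⊆ R a b :=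
    (hint a b).ordConnected.uIcc_subset (hR.left_mem a b) (hR.right_mem a b)
  refine Set.Subset.antisymm (fun w hw => ?_) (uIcc_subset u v)
  rcases mem_uIcc_or_mem_uIcc_or_mem_uIcc u v w with hu | hv | hw_mem
  · obtain rfl : w = u := hb v u w (hR.symm u v ▸ hw) (uIcc_subset v w hu)
    exact Set.left_mem_uIcc
  · obtain rfl : w = v := hb u v w hw (uIcc_subset u w hv)
    exact Set.right_mem_uIcc
  · exact hw_mem

/-- A monotone pyramidal transit function (with witnessing total
order <) satisfying (b3) or (b4) has R(u,v) = [u,v] for all u ≤ v. -/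
theorem stmt_5 {V : Type*} [Fintype V] [Nonempty V] [LinearOrder V]
    (R : V → V → Set V) (htf : IsTransit R) (hm : IsMonotone R)
    (hint : ∀ u v : V, IsIntervalWrt (· < ·) (R u v))
    (hb : AxB3 R ∨ AxB4 R) :
    ∀ u v : V, u ≤ v → R u v = Set.Icc u v := by
  have hb1 : AxB1 R := hb.elim (·.axB1 htf.self) (·.axB1 htf.right_mem)
  exact fun u v huv => (stmt_5_general htf hint hb1 u v).trans (Set.uIcc_of_le huv)

end TransitPaper
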